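/- Let ε = (1−i−j+k)/2, let r₂ = (0; 1, −1) and r₃ = (0; 1, −ε) be the indicated roots of L = Λ⊕H, and let R = φ_{r₃}^i ∘ φ_{r₂}^j. Then for every λ ∈ Λ and every purely imaginary quaternion z, R ∘ T_{λ,z} ∘ R⁻¹ = T_{λε̄, εzε̄}. -/

import Mathlib

/- Formalization over the ring ℋ of Hurwitz integers inside the real quaternions. -/

noncomputable section
open Quaternion Finset

/-- The real quaternions ℍ. -/
abbrev Quat := Quaternion ℝ

/-- The quaternion `i`. -/
def qi : Quat := ⟨0, 1, 0, 0⟩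
/-- The quaternion `j`. -/
def qj : Quat := ⟨0, 0, 1, 0⟩
/-- The quaternion `k`. -/
def qk : Quat := ⟨0, 0, 0, 1⟩
/-- `p = 1 - i`. -/
def qp : Quat := 1 - qi

/-- A quaternion is a Hurwitz integer if it is `(a+bi+cj+dk)/2` with
`a,b,c,d` integers which are all congruent mod `2`. -/
def IsHurwitz (q : Quat) : Prop :=
  ∃ a b c d : ℤ, a % 2 = b % 2 ∧ b % 2 = c % 2 ∧ c % 2 = d % 2 ∧
    q = ⟨(a : ℝ) / 2, (b : ℝ) / 2, (c : ℝ) / 2, (d : ℝ) / 2⟩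

/-- A unit of the ring ℋ of Hurwitz integers. -/
def IsUnitH (q : Quat) : Prop :=
  IsHurwitz q ∧ ∃ r : Quat, IsHurwitz r ∧ q * r = 1 ∧ r * q = 1

/-- Membership in the (two-sided) ideal `pℋ`. -/
def InPH (q : Quat) : Prop := ∃ h : Quat, IsHurwitz h ∧ q = qp * h

/-- `ω = (−1+i+j+k)/2`. -/
def omg : Quat := ⟨-1/2, 1/2, 1/2, 1/2⟩

/-- Membership in the ideal `2ℋ`. -/
def In2H (q : Quat) : Prop := ∃ h : Quat, IsHurwitz h ∧ q = 2 * h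
/-- Membership in the ideal `(2+2i)ℋ`. -/
def In2p2iH (q : Quat) : Prop := ∃ h : Quat, IsHurwitz h ∧ q = (2 + 2 * qi) * h

/-- The quaternionic Leech lattice `Λ` (coordinates `(v∞,v₀,v₁,v₂,v₃,v₄)`). -/
def memLeech (v : Fin 6 → Quat) : Prop :=
  (∀ s, IsHurwitz (v s)) ∧
  InPH (v 3 - v 4) ∧ InPH (v 4 - v 5) ∧
  In2H ((v 2 + v 5) * star omg + (v 3 + v 4) * omg) ∧
  In2H ((v 1 + v 2) * omg + (v 3 + v 5) * star omg) ∧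
  In2p2iH (-(v 0) * (qi + qj + qk) + v 1 + v 2 + v 3 + v 4 + v 5)

/-- The ambient space of `L = Λ ⊕ H`: vectors `(λ; μ, ν)`. -/
abbrev VL : Type := (Fin 6 → Quat) × Quat × Quat

/-- The form on (the ambient space of) the Leech lattice: `⟨x,y⟩ = −(1/2) Σ x̄ₛ yₛ`. -/
def ipLeech (x y : Fin 6 → Quat) : Quat := -(2 : Quat)⁻¹ * ∑ s : Fin 6, star (x s) * y s

/-- The ℋ-valued form on `L = Λ ⊕ H`. -/
def ipLL (x y : VL) : Quat :=
  ipLeech x.1 y.1 + star x.2.1 * star qp * y.2.2 + star x.2.2 * qp * y.2.1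

/-- Membership in the lattice `L = Λ ⊕ H`. -/
def memLL (v : VL) : Prop := memLeech v.1 ∧ IsHurwitz v.2.1 ∧ IsHurwitz v.2.2

/-- Right scalar multiplication on the ambient space of `Λ ⊕ H`. -/
def rmulL (v : VL) (q : Quat) : VL := (fun s => v.1 s * q, v.2.1 * q, v.2.2 * q)

/-- The `μ`-reflection in a root `r` : `v ↦ v − r(1−μ)⟨r,v⟩/|r|²`. -/
def reflL (r : VL) (μ : Quat) (v : VL) : VL := v - rmulL r ((1 - μ) * ipLL r v / ipLL r r)

/-- Right scalar multiplication on (the ambient space of) the Leech lattice. -/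
def rmulLam (lam : Fin 6 → Quat) (q : Quat) : Fin 6 → Quat := fun s => lam s * q

/-- The translation `T_{λ,z}` :
`(m; μ, ν) ↦ (m + λμ; μ, ν − p̄⁻¹⟨λ,m⟩ + p̄⁻¹(z − ⟨λ,λ⟩/2)μ)`. -/
def Tlz (lam : Fin 6 → Quat) (z : Quat) (v : VL) : VL :=
  (v.1 + rmulLam lam v.2.1, v.2.1,
   v.2.2 - (star qp)⁻¹ * ipLeech lam v.1 + (star qp)⁻¹ * (z - ipLeech lam lam / 2) * v.2.1)

/-- The imaginary part `Im q = (q − q̄)/2` of a quaternion. -/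
def Imq (q : Quat) : Quat := (q - star q) / 2

/-- `ε = (1−i−j+k)/2`. -/
def eps : Quat := ⟨1/2, -1/2, -1/2, 1/2⟩

/-- The root `r₂ = (0; 1, −1)` of `Λ ⊕ H`. -/
def r2 : VL := (0, 1, -1)
/-- The root `r₃ = (0; 1, −ε)` of `Λ ⊕ H`. -/
def r3 : VL := (0, 1, -eps)

/-- `R = φ_{r₃}^i ∘ φ_{r₂}^j`. -/
def Rf : VL → VL := fun v => reflL r3 qi (reflL r2 qj v)

/-- The scalar `-1/2`. -/
def qh : Quat := ⟨-1/2, 0, 0, 0⟩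
@[simp] theorem qh_re : qh.re = -1/2 := rfl
@[simp] theorem qh_imI : qh.imI = 0 := rfl
@[simp] theorem qh_imJ : qh.imJ = 0 := rfl
@[simp] theorem qh_imK : qh.imK = 0 := rfl

/-- The off-diagonal coefficient of `R`. -/
def qe : Quat := ⟨3/2, -1/2, 1/2, -1/2⟩
@[simp] theorem qe_re : qe.re = 3/2 := rfl
@[simp] theorem qe_imI : qe.imI = -1/2 := rfl
@[simp] theorem qe_imJ : qe.imJ = 1/2 := rfl
@[simp] theorem qe_imK : qe.imK = -1/2 := rfl

/-- The inverse of `p̄`. -/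
def qw : Quat := ⟨1/2, -1/2, 0, 0⟩

@[simp] theorem qi_re : qi.re = 0 := rfl
@[simp] theorem qi_imI : qi.imI = 1 := rfl
@[simp] theorem qi_imJ : qi.imJ = 0 := rfl
@[simp] theorem qi_imK : qi.imK = 0 := rfl
@[simp] theorem qj_re : qj.re = 0 := rfl
@[simp] theorem qj_imI : qj.imI = 0 := rfl
@[simp] theorem qj_imJ : qj.imJ = 1 := rfl
@[simp] theorem qj_imK : qj.imK = 0 := rfl
@[simp] theorem eps_re : eps.re = 1/2 := rfl
@[simp] theorem eps_imI : eps.imI = -1/2 := rfl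
@[simp] theorem eps_imJ : eps.imJ = -1/2 := rfl
@[simp] theorem eps_imK : eps.imK = 1/2 := rfl
@[simp] theorem qw_re : qw.re = 1/2 := rfl
@[simp] theorem qw_imI : qw.imI = -1/2 := rfl
@[simp] theorem qw_imJ : qw.imJ = 0 := rfl
@[simp] theorem qw_imK : qw.imK = 0 := rfl

theorem ipLL_r2 (v : VL) : ipLL r2 v = star qp * v.2.2 - qp * v.2.1 := by
  simp [ipLL, ipLeech, r2, sub_eq_add_neg]

theorem ipLL_r3 (v : VL) : ipLL r3 v = star qp * v.2.2 - star eps * qp * v.2.1 := by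
  simp [ipLL, ipLeech, r3, sub_eq_add_neg]

theorem ipLL_r2_r2 : ipLL r2 r2 = ((-2 : ℝ) : Quat) := by
  rw [ipLL_r2]
  ext <;> simp [r2, qp] <;> norm_num

theorem ipLL_r3_r3 : ipLL r3 r3 = ((-2 : ℝ) : Quat) := by
  rw [ipLL_r3]
  ext <;> simp [r3, qp] <;> norm_num

theorem div_neg_two (q : Quat) : q / ((-2 : ℝ) : Quat) = qh * q := by
  have e : qh = ((-1/2 : ℝ) : Quat) := rfl
  rw [e]
  have h : ((-2 : ℝ) : Quat)⁻¹ = ((-1/2 : ℝ) : Quat) := by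
    rw [← Quaternion.coe_inv]; norm_num
  rw [div_eq_mul_inv, h]
  exact (Quaternion.coe_commutes _ _).symm

/-- The unit `p̄⁻¹ ε p̄`. -/
def epsD : Quat := (star qp)⁻¹ * eps * star qp

theorem inv_star_qp : (star qp)⁻¹ = qw := by
  apply inv_eq_of_mul_eq_one_right
  ext <;> simp [qp] <;> norm_num

theorem epsD_mul : epsD * (star qp)⁻¹ = (star qp)⁻¹ * eps := by
  have h : star qp ≠ 0 := by
    intro h
    have := congrArg (fun q : Quat => q.re) h
    simp [qp] at this
  rw [epsD, mul_assoc, mul_inv_cancel₀ h, mul_one]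

set_option maxHeartbeats 1000000 in
theorem Rf_apply (v : VL) : Rf v = (v.1, eps * v.2.1, qe * v.2.1 + epsD * v.2.2) := by
  obtain ⟨m, x, y⟩ := v
  unfold Rf reflL
  rw [ipLL_r2_r2, ipLL_r3_r3, ipLL_r3, ipLL_r2, div_neg_two, div_neg_two, epsD, inv_star_qp]
  refine Prod.ext ?_ (Prod.ext ?_ ?_)
  · funext s
    simp [rmulL, r2, r3]
  · ext <;> simp [rmulL, r2, r3, qp] <;> ring
  · ext <;> simp [rmulL, r2, r3, qp] <;> ring

theorem star_eps_mul : star eps * eps = 1 := by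
  ext <;> simp <;> norm_num

theorem two_inv_coe : -(2 : Quat)⁻¹ = ((-1/2 : ℝ) : Quat) := by
  have h : (2 : Quat) = ((2 : ℝ) : Quat) := by norm_cast
  rw [h, ← Quaternion.coe_inv, ← Quaternion.coe_neg]; norm_num

theorem ipLeech_left (x y : Fin 6 → Quat) :
    ipLeech (rmulLam x (star eps)) y = eps * ipLeech x y := by
  simp only [ipLeech, rmulLam, star_mul, star_star, mul_assoc, ← Finset.mul_sum, two_inv_coe]
  rw [← mul_assoc, Quaternion.coe_commutes, mul_assoc]

theorem ipLeech_right (x y : Fin 6 → Quat) (q : Quat) :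
    ipLeech x (rmulLam y q) = ipLeech x y * q := by
  simp only [ipLeech, rmulLam, mul_assoc, Finset.sum_mul]

theorem half_comm (q r : Quat) : q * r / 2 = q / 2 * r := by
  have h : Commute (2 : Quat)⁻¹ r := (Commute.ofNat_left 2 r).inv_left₀
  rw [div_eq_mul_inv, div_eq_mul_inv, mul_assoc, mul_assoc, h.eq]

/-- For every `λ ∈ Λ` and purely imaginary `z`,
`R ∘ T_{λ,z} ∘ R⁻¹ = T_{λε̄, εzε̄}`, stated equivalently (avoiding inverses) as
`R ∘ T_{λ,z} = T_{λε̄, εzε̄} ∘ R`. -/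
theorem conjugation_of_translation (lam : Fin 6 → Quat) (z : Quat)
    (hlam : memLeech lam) (hz : z.re = 0) :
    ∀ v : VL, Rf (Tlz lam z v) = Tlz (rmulLam lam (star eps)) (eps * z * star eps) (Rf v) := by
  intro v
  rw [Rf_apply, Rf_apply]
  unfold Tlz
  refine Prod.ext ?_ (Prod.ext ?_ ?_)
  · funext s
    simp only [rmulLam, Pi.add_apply]
    rw [mul_assoc (lam s), ← mul_assoc (star eps), star_eps_mul, one_mul]
  · rfl
  · simp only
    rw [ipLeech_left, ipLeech_left, ipLeech_right, ← mul_assoc eps, half_comm,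
      mul_div_assoc eps, ← sub_mul, ← mul_sub, mul_add, mul_sub, ← mul_assoc epsD,
      ← mul_assoc epsD, ← mul_assoc epsD, epsD_mul]
    have key : ∀ q : Quat, (star qp)⁻¹ * (eps * q * star eps) * (eps * v.2.1)
        = (star qp)⁻¹ * eps * q * v.2.1 := by
      intro q
      calc _ = (star qp)⁻¹ * eps * q * (star eps * eps) * v.2.1 := by
            simp only [mul_assoc]
        _ = _ := by rw [star_eps_mul, mul_one]
    rw [key, mul_assoc (star qp)⁻¹ eps (ipLeech lam v.1)]
    abel
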